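/- Consider the leader-following multi-agent system under the stated hypotheses (Assumption 1 with possibly unknown growth rates ρ_{k,j}, L̄ = L_G + B_L positive definite, and A_c = I_N⊗A − L̄⊗(BK) Hurwitz). Then there exists a proportional coefficient b ≥ T such that for every family of continuously differentiable functions x_0,…,x_N : [0,T) → ℝⁿ solving the closed-loop system with the distributed state-feedback protocol u_k(t) = −K Λ_{r(t)} ( Σ_{j=1}^N a_{kj}(x_k(t)−x_j(t)) + b_k(x_k(t)−x_0(t)) ), the following hold for each follower k ∈ {1,…,N}: (i) x_k − x_0 is bounded on [0,T); (ii) there exist constants κ > 0 and C ≥ 0 (C depending on the initial data) such that |x_k(t) − x_0(t)| ≤ C (T−t)^{(κ+2)/2} for all t ∈ [0,T), so x_k(t) − x_0(t) → 0 as t → T⁻; (iii) the control u_k is bounded on [0,T). -/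

import Mathlib

open Matrix Filter Set
open scoped Kronecker

/-- The Euclidean norm of a finitely-indexed real vector. -/
noncomputable def enorm' {ι : Type*} [Fintype ι] (v : ι → ℝ) : ℝ :=
  Real.sqrt (∑ i, v i ^ 2)

/-- A real square matrix is Hurwitz if every (complex) eigenvalue has negative
real part. -/
def IsHurwitz {m : Type*} [Fintype m] [DecidableEq m] (M : Matrix m m ℝ) : Prop :=
  ∀ s : ℂ, (s • (1 : Matrix m m ℂ) - M.map (algebraMap ℝ ℂ)).det = 0 → s.re < 0

/-
With `r = b / (T - t)` the scaling `Λ_r` satisfies `Λ_r A = r A Λ_r` and `Λ_r B = r B`. Hence the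
stacked scaled tracking errors `η_k = Λ_r (x_k - x_0)` obey `η' = (b / (T - t)) A_c η + g`. The
remainder `g` collects the drift of `Λ_r` and the nonlinearities; as Assumption 1 is lower
triangular and `r ≥ 1`, it satisfies `‖g‖ ≤ (c / (T - t)) ‖η‖` with `c` independent of `b`. A
Lyapunov function `V = ηᵀ P η` of `A_c` therefore satisfies `V' ≤ -(2p / (T - t)) V` as soon as `b`
is large, which forces `‖η‖ = O((T - t) ^ p)` for any prescribed `p`. The errors are dominated by
`η` because `r ≥ 1`, and the controls are linear in `η` with constant coefficients.
-/

section DiscreteTime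

theorem tendsto_pow_atTop_nhds_zero_of_spectralRadius_lt_one {E : Type*} [NormedRing E]
    [NormedAlgebra ℂ E] [CompleteSpace E] {a : E} (ha : spectralRadius ℂ a < 1) :
    Tendsto (fun k : ℕ => a ^ k) atTop (nhds 0) := by
  obtain ⟨q, haq, hq⟩ := ENNReal.lt_iff_exists_nnreal_btwn.1 ha
  have hq_pow : Tendsto (fun k => (q : ℝ) ^ k) atTop (nhds 0) :=
    tendsto_pow_atTop_nhds_zero_of_lt_one q.2 (mod_cast hq)
  have hroot :=
    (spectrum.pow_nnnorm_pow_one_div_tendsto_nhds_spectralRadius a).eventually_lt_const haq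
  refine squeeze_zero_norm' ?_ hq_pow
  filter_upwards [hroot, eventually_gt_atTop 0] with k hk hk0
  have hpow : (‖a ^ k‖₊ : ENNReal) ≤ (q : ENNReal) ^ (k : ℝ) :=
    (ENNReal.rpow_inv_le_iff (mod_cast hk0)).1 (by simpa only [one_div] using hk.le)
  rw [ENNReal.rpow_natCast] at hpow
  exact_mod_cast hpow

theorem exists_pos_forall_norm_one_add_mul_lt_one {S : Set ℂ} (hS : S.Finite)
    (hneg : ∀ s ∈ S, s.re < 0) : ∃ ε : ℝ, 0 < ε ∧ ∀ s ∈ S, ‖1 + (ε : ℂ) * s‖ < 1 := by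
  have hsmall : ∀ᶠ ε : ℝ in nhdsWithin 0 (Ioi 0), ∀ s ∈ S, ‖1 + (ε : ℂ) * s‖ < 1 := by
    rw [eventually_all_finite hS]
    intro s hs
    have hnormSq : 0 < Complex.normSq s + 1 := by linarith [Complex.normSq_nonneg s]
    have hbound : 0 < -2 * s.re / (Complex.normSq s + 1) :=
      div_pos (by linarith [hneg s hs]) hnormSq
    filter_upwards [Ioo_mem_nhdsGT hbound] with ε ⟨hε, hεs⟩
    rw [lt_div_iff₀ hnormSq] at hεs
    have hexpand : ‖1 + (ε : ℂ) * s‖ ^ 2 = 1 + ε * (2 * s.re + ε * Complex.normSq s) := by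
      rw [← Complex.normSq_eq_norm_sq]
      simp only [Complex.normSq_apply, Complex.add_re, Complex.one_re, Complex.mul_re,
        Complex.ofReal_re, Complex.ofReal_im, zero_mul, sub_zero, Complex.add_im, Complex.one_im,
        Complex.mul_im, add_zero, zero_add]
      ring
    rw [← sq_lt_one_iff₀ (norm_nonneg _), hexpand]
    nlinarith
  obtain ⟨ε, hεS, hε⟩ := (hsmall.and self_mem_nhdsWithin).exists
  exact ⟨ε, hε, hεS⟩

variable {m : Type*} [Fintype m] [DecidableEq m]

open scoped Matrix.Norms.L2Operator in
theorem posDef_one_sub_transpose_mul_self {R : Matrix m m ℝ} (hR : ‖R‖ < 1) :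
    (1 - Rᵀ * R).PosDef := by
  refine .of_dotProduct_mulVec_pos (isHermitian_one.sub (isHermitian_conjTranspose_mul_self R))
    fun v hv => ?_
  have hnormSq : ∀ w : m → ℝ, w ⬝ᵥ w = ‖WithLp.toLp 2 w‖ ^ 2 := fun w => by
    rw [EuclideanSpace.real_norm_sq_eq]
    simp only [dotProduct, sq]
  have hv_pos : 0 < ‖WithLp.toLp 2 v‖ := by simpa using hv
  have hRv : ‖WithLp.toLp 2 (R *ᵥ v)‖ < ‖WithLp.toLp 2 v‖ :=
    (l2_opNorm_mulVec R (WithLp.toLp 2 v)).trans_lt (mul_lt_of_lt_one_left hv_pos hR)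
  rw [star_trivial, sub_mulVec, one_mulVec, dotProduct_sub, ← mulVec_mulVec, dotProduct_mulVec,
    vecMul_transpose, hnormSq, hnormSq, sub_pos]
  gcongr

theorem transpose_mul_sum_pow_mul_add_one {R : Type*} [CommRing R] (Q : Matrix m m R) (k : ℕ) :
    Qᵀ * (∑ j ∈ Finset.range k, (Q ^ j)ᵀ * Q ^ j) * Q + 1 =
      (∑ j ∈ Finset.range k, (Q ^ j)ᵀ * Q ^ j) + (Q ^ k)ᵀ * Q ^ k := by
  rw [← Finset.sum_range_succ, Finset.sum_range_succ', Finset.mul_sum, Finset.sum_mul]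
  simp only [pow_succ, transpose_mul, Matrix.mul_assoc, pow_zero, transpose_one, mul_one]

theorem posDef_sum_range_succ_transpose_pow_mul_pow (Q : Matrix m m ℝ) (k : ℕ) :
    (∑ j ∈ Finset.range (k + 1), (Q ^ j)ᵀ * Q ^ j).PosDef := by
  rw [Finset.sum_range_succ']
  simpa using PosDef.posSemidef_add
    (posSemidef_sum (Finset.range k) fun j _ => posSemidef_conjTranspose_mul_self (Q ^ (j + 1)))
    PosDef.one

end DiscreteTime

namespace IsHurwitz

variable {m : Type*} [Fintype m] [DecidableEq m] {M : Matrix m m ℝ}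

theorem re_neg_of_mem_spectrum (hM : IsHurwitz M) {s : ℂ}
    (hs : s ∈ spectrum ℂ (M.map (algebraMap ℝ ℂ))) : s.re < 0 := by
  apply hM
  rwa [spectrum.mem_iff, isUnit_iff_isUnit_det, isUnit_iff_ne_zero, not_not,
    Algebra.algebraMap_eq_smul_one] at hs

open scoped Matrix.Norms.L2Operator in
theorem exists_pos_tendsto_one_add_smul_pow (hM : IsHurwitz M) :
    ∃ ε : ℝ, 0 < ε ∧ Tendsto (fun k : ℕ => (1 + ε • M) ^ k) atTop (nhds 0) := by
  cases isEmpty_or_nonempty m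
  · exact ⟨1, one_pos, tendsto_const_nhds.congr fun _ => Subsingleton.elim _ _⟩
  set Mℂ := M.map (algebraMap ℝ ℂ)
  obtain ⟨ε, hε, hdisc⟩ := exists_pos_forall_norm_one_add_mul_lt_one
    (Matrix.finite_spectrum Mℂ) fun s => hM.re_neg_of_mem_spectrum
  refine ⟨ε, hε, ?_⟩
  have hradius : spectralRadius ℂ (1 + (ε : ℂ) • Mℂ) < 1 := by
    rw [← ENNReal.coe_one]
    refine spectrum.spectralRadius_lt_of_forall_lt _ fun s hs => ?_
    have haeval : Polynomial.aeval Mℂ (1 + Polynomial.C (ε : ℂ) * Polynomial.X) =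
        1 + (ε : ℂ) • Mℂ := by
      simp [Algebra.smul_def]
    rw [← haeval, spectrum.map_polynomial_aeval] at hs
    obtain ⟨z, hz, rfl⟩ := hs
    simpa [← NNReal.coe_lt_coe] using hdisc z hz
  have hre : ∀ k : ℕ, (1 + ε • M) ^ k = ((1 + (ε : ℂ) • Mℂ) ^ k).map Complex.re := by
    intro k
    have hmap : 1 + (ε : ℂ) • Mℂ = Complex.ofRealHom.mapMatrix (1 + ε • M) := by
      ext i j
      simp [Mℂ, one_apply, apply_ite Complex.ofReal]
    rw [hmap, ← map_pow]
    ext i j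
    simp
  have hcont : Continuous fun X : Matrix m m ℂ => X.map Complex.re := by fun_prop
  simpa [hre, Function.comp_def] using (hcont.tendsto 0).comp
    (tendsto_pow_atTop_nhds_zero_of_spectralRadius_lt_one hradius)

-- With `Q = 1 + ε M` and `P = ∑ j ≤ k, (Qʲ)ᵀ Qʲ`, both `1 - (Qᵏ⁺¹)ᵀ Qᵏ⁺¹ = P - Qᵀ P Q` and
-- `P - Qᵀ P Q = -ε (Mᵀ P + P M) - ε² Mᵀ P M`, so a finite sum suffices once `‖Qᵏ⁺¹‖ < 1`.
open scoped Matrix.Norms.L2Operator in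
theorem exists_lyapunov (hM : IsHurwitz M) :
    ∃ P : Matrix m m ℝ, P.PosDef ∧ (-(Mᵀ * P + P * M)).PosDef := by
  obtain ⟨ε, hε, hpow⟩ := hM.exists_pos_tendsto_one_add_smul_pow
  set Q := 1 + ε • M with hQ
  obtain ⟨k, hk⟩ : ∃ k, ‖Q ^ (k + 1)‖ < 1 :=
    (((tendsto_add_atTop_iff_nat 1).2 hpow).norm.eventually_lt_const (by simp)).exists
  set P := ∑ j ∈ Finset.range (k + 1), (Q ^ j)ᵀ * Q ^ j
  have hP : P.PosDef := posDef_sum_range_succ_transpose_pow_mul_pow Q k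
  have hdecomp : -(Mᵀ * P + P * M) =
      ε⁻¹ • (1 - (Q ^ (k + 1))ᵀ * Q ^ (k + 1)) + ε • (Mᵀ * P * M) := by
    have hstein : 1 - (Q ^ (k + 1))ᵀ * Q ^ (k + 1) = P - Qᵀ * P * Q := by
      rw [sub_eq_sub_iff_add_eq_add, ← transpose_mul_sum_pow_mul_add_one, add_comm]
    have hexpand : P - Qᵀ * P * Q = -(ε • (Mᵀ * P + P * M) + ε • ε • (Mᵀ * P * M)) := by
      simp only [hQ, transpose_add, transpose_one, transpose_smul, add_mul, mul_add, one_mul,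
        mul_one, smul_mul, Matrix.mul_smul, smul_add]
      abel
    rw [hstein, hexpand, smul_neg, smul_add, inv_smul_smul₀ hε.ne', inv_smul_smul₀ hε.ne']
    abel
  refine ⟨P, hP, hdecomp ▸ ?_⟩
  exact ((posDef_one_sub_transpose_mul_self hk).smul (inv_pos.2 hε)).add_posSemidef
    ((hP.posSemidef.conjTranspose_mul_mul_same M).smul hε.le)

end IsHurwitz

section QuadraticForm

variable {m : Type*} [Fintype m]

theorem exists_abs_dotProduct_mulVec_le (P : Matrix m m ℝ) :
    ∃ β : ℝ, 0 ≤ β ∧ ∀ v w : m → ℝ, |v ⬝ᵥ P *ᵥ w| ≤ β * ‖v‖ * ‖w‖ := by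
  classical
  let P' := (toLinearMap₂' ℝ P : (m → ℝ) →ₗ[ℝ] (m → ℝ) →ₗ[ℝ] ℝ).toContinuousBilinearMap
  refine ⟨‖P'‖, norm_nonneg P', fun v w => ?_⟩
  simpa [P', toLinearMap₂'_apply'] using P'.le_opNorm₂ v w

theorem exists_pos_mul_sq_norm_le_dotProduct_mulVec {P : Matrix m m ℝ} (hP : P.PosDef) :
    ∃ α : ℝ, 0 < α ∧ ∀ v : m → ℝ, α * ‖v‖ ^ 2 ≤ v ⬝ᵥ P *ᵥ v := by
  cases isEmpty_or_nonempty m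
  · exact ⟨1, one_pos, fun v => by simp [Subsingleton.elim v 0]⟩
  have hcont : ContinuousOn (fun v : m → ℝ => v ⬝ᵥ P *ᵥ v) (Metric.sphere 0 1) := by fun_prop
  obtain ⟨v₀, hv₀, hmin⟩ := (isCompact_sphere (0 : m → ℝ) 1).exists_isMinOn
    (NormedSpace.sphere_nonempty.2 zero_le_one) hcont
  have hpos : 0 < v₀ ⬝ᵥ P *ᵥ v₀ := hP.dotProduct_mulVec_pos (ne_zero_of_mem_unit_sphere ⟨v₀, hv₀⟩)
  refine ⟨_, hpos, fun v => ?_⟩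
  rcases eq_or_ne v 0 with rfl | hv
  · simp
  have hunit : ‖v‖⁻¹ • v ∈ Metric.sphere (0 : m → ℝ) 1 := by
    simp [norm_smul, norm_ne_zero_iff.2 hv]
  have hle := isMinOn_iff.1 hmin _ hunit
  simp only [mulVec_smul, dotProduct_smul, smul_dotProduct, smul_eq_mul] at hle
  have hv_pos := norm_pos_iff.2 hv
  field_simp at hle
  linarith

theorem hasDerivWithinAt_dotProduct_mulVec_self {P : Matrix m m ℝ} (hP : Pᵀ = P)
    {η : ℝ → m → ℝ} {η' : m → ℝ} {s : Set ℝ} {t : ℝ} (hη : HasDerivWithinAt η η' s t) :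
    HasDerivWithinAt (fun t => η t ⬝ᵥ P *ᵥ η t) (2 * (η t ⬝ᵥ P *ᵥ η')) s t := by
  have hi := hasDerivWithinAt_pi.1 hη
  have hPη : ∀ i, HasDerivWithinAt (fun t => (P *ᵥ η t) i) ((P *ᵥ η') i) s t := fun i =>
    HasDerivWithinAt.fun_sum fun j _ => (hi j).const_mul (P i j)
  refine (HasDerivWithinAt.fun_sum fun i _ => (hi i).mul (hPη i)).congr_deriv ?_
  rw [Finset.sum_add_distrib]
  change η' ⬝ᵥ P *ᵥ η t + η t ⬝ᵥ P *ᵥ η' = _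
  rw [dotProduct_mulVec η', ← mulVec_transpose, hP, dotProduct_comm, two_mul]

end QuadraticForm

theorem le_mul_rpow_of_hasDerivWithinAt_le {V V' : ℝ → ℝ} {t₀ T p : ℝ}
    (hV : ∀ t ∈ Ico t₀ T, HasDerivWithinAt V (V' t) (Ico t₀ T) t)
    (hV' : ∀ t ∈ Ico t₀ T, V' t ≤ -(p / (T - t)) * V t) {t : ℝ} (ht : t ∈ Ico t₀ T) :
    V t ≤ V t₀ * ((T - t) / (T - t₀)) ^ p := by
  have hpos : ∀ t ∈ Ico t₀ T, 0 < T - t := fun t ht => sub_pos.2 ht.2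
  set W : ℝ → ℝ := fun t => V t * (T - t) ^ (-p)
  set W' : ℝ → ℝ := fun t => (V' t + p / (T - t) * V t) * (T - t) ^ (-p) with hW'
  have hderiv : ∀ t ∈ Ico t₀ T, HasDerivWithinAt W (W' t) (Ico t₀ T) t := by
    intro t ht
    have hrpow := ((hasDerivWithinAt_id t (Ico t₀ T)).const_sub T).rpow_const (p := -p)
      (.inl (hpos t ht).ne')
    refine ((hV t ht).mul hrpow).congr_deriv ?_
    simp only [id, hW', Real.rpow_sub_one (hpos t ht).ne']
    ring
  have hanti : AntitoneOn W (Ico t₀ T) := by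
    refine antitoneOn_of_hasDerivWithinAt_nonpos (f' := W') (convex_Ico t₀ T)
      (fun t ht => (hderiv t ht).continuousWithinAt)
      (fun t ht => (hderiv t (interior_subset ht)).mono interior_subset) fun t ht => ?_
    have ht := interior_subset ht
    exact mul_nonpos_of_nonpos_of_nonneg (by linarith [hV' t ht])
      (Real.rpow_nonneg (hpos t ht).le _)
  have ht₀ : t₀ ∈ Ico t₀ T := ⟨le_rfl, ht.1.trans_lt ht.2⟩
  have hle : V t * (T - t) ^ (-p) ≤ V t₀ * (T - t₀) ^ (-p) := hanti ht₀ ht ht.1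
  rw [Real.rpow_neg (hpos t ht).le, Real.rpow_neg (hpos t₀ ht₀).le, ← div_eq_mul_inv,
    ← div_eq_mul_inv, div_le_iff₀ (Real.rpow_pos_of_pos (hpos t ht) p)] at hle
  rw [Real.div_rpow (hpos t ht).le (hpos t₀ ht₀).le]
  exact hle.trans_eq (by ring)

namespace IsHurwitz

variable {m : Type*} [Fintype m] [DecidableEq m] {M : Matrix m m ℝ}

theorem exists_lyapunov_gain (hM : IsHurwitz M) (c p : ℝ) :
    ∃ P : Matrix m m ℝ, P.PosDef ∧ ∃ b₀ : ℝ, ∀ b ≥ b₀, ∀ s > 0, ∀ v w : m → ℝ,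
      ‖w‖ ≤ c / s * ‖v‖ → 2 * (v ⬝ᵥ P *ᵥ ((b / s) • (M *ᵥ v) + w)) ≤ -(p / s) * (v ⬝ᵥ P *ᵥ v) := by
  obtain ⟨P, hP, hMP⟩ := hM.exists_lyapunov
  obtain ⟨α, hα, hα_le⟩ := exists_pos_mul_sq_norm_le_dotProduct_mulVec hMP
  obtain ⟨β, hβ, hβ_le⟩ := exists_abs_dotProduct_mulVec_le P
  have hdissip : ∀ v, 2 * (v ⬝ᵥ P *ᵥ (M *ᵥ v)) ≤ -(α * ‖v‖ ^ 2) := by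
    intro v
    have hsymm : v ⬝ᵥ (Mᵀ * P) *ᵥ v = v ⬝ᵥ P *ᵥ (M *ᵥ v) := by
      rw [← mulVec_mulVec, dotProduct_mulVec, vecMul_transpose, dotProduct_mulVec,
        ← mulVec_transpose, dotProduct_comm]
      congr 2
      exact hP.isHermitian
    have := hα_le v
    rw [neg_mulVec, add_mulVec, dotProduct_neg, dotProduct_add, hsymm, ← mulVec_mulVec] at this
    linarith
  refine ⟨P, hP, (2 * β * |c| + |p| * β) / α, fun b hb s hs v w hw => ?_⟩
  have hb_nonneg : 0 ≤ b := le_trans (by positivity) hb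
  rw [ge_iff_le, div_le_iff₀ hα] at hb
  have hdrift : b / s * (2 * (v ⬝ᵥ P *ᵥ (M *ᵥ v))) ≤ b / s * -(α * ‖v‖ ^ 2) := by
    gcongr
    exact hdissip v
  have hpert : v ⬝ᵥ P *ᵥ w ≤ β * ‖v‖ * (|c| / s * ‖v‖) := calc
    v ⬝ᵥ P *ᵥ w ≤ β * ‖v‖ * ‖w‖ := (le_abs_self _).trans (hβ_le v w)
    _ ≤ β * ‖v‖ * (|c| / s * ‖v‖) := by
      gcongr
      exact hw.trans (by gcongr; exact le_abs_self c)
  have hrate : p / s * (v ⬝ᵥ P *ᵥ v) ≤ |p| / s * (β * ‖v‖ * ‖v‖) := calc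
    p / s * (v ⬝ᵥ P *ᵥ v) ≤ |p / s * (v ⬝ᵥ P *ᵥ v)| := le_abs_self _
    _ = |p| / s * |v ⬝ᵥ P *ᵥ v| := by rw [abs_mul, abs_div, abs_of_pos hs]
    _ ≤ |p| / s * (β * ‖v‖ * ‖v‖) := by gcongr; exact hβ_le v v
  have hgain : (2 * β * |c| + |p| * β) * (‖v‖ ^ 2 / s) ≤ b * α * (‖v‖ ^ 2 / s) := by gcongr
  rw [mulVec_add, mulVec_smul, dotProduct_add, dotProduct_smul, smul_eq_mul]
  calc 2 * (b / s * (v ⬝ᵥ P *ᵥ (M *ᵥ v)) + v ⬝ᵥ P *ᵥ w)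
      ≤ b / s * -(α * ‖v‖ ^ 2) + 2 * (β * ‖v‖ * (|c| / s * ‖v‖)) := by linarith
    _ = (2 * β * |c| + |p| * β) * (‖v‖ ^ 2 / s) - b * α * (‖v‖ ^ 2 / s)
          - |p| / s * (β * ‖v‖ * ‖v‖) := by ring
    _ ≤ -(p / s) * (v ⬝ᵥ P *ᵥ v) := by linarith

theorem exists_gain_norm_le_mul_rpow (hM : IsHurwitz M) (c p : ℝ) :
    ∃ b₀ γ : ℝ, 0 ≤ γ ∧ ∀ b ≥ b₀, ∀ (t₀ T : ℝ) (η g : ℝ → m → ℝ),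
      (∀ t ∈ Ico t₀ T,
        HasDerivWithinAt η ((b / (T - t)) • (M *ᵥ η t) + g t) (Ico t₀ T) t) →
      (∀ t ∈ Ico t₀ T, ‖g t‖ ≤ c / (T - t) * ‖η t‖) →
      ∀ t ∈ Ico t₀ T, ‖η t‖ ≤ γ * ‖η t₀‖ * ((T - t) / (T - t₀)) ^ p := by
  obtain ⟨P, hP, b₀, hb₀⟩ := hM.exists_lyapunov_gain c (p * 2)
  obtain ⟨α, hα, hα_le⟩ := exists_pos_mul_sq_norm_le_dotProduct_mulVec hP
  obtain ⟨β, hβ, hβ_le⟩ := exists_abs_dotProduct_mulVec_le P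
  refine ⟨b₀, √(β / α), Real.sqrt_nonneg _, fun b hb t₀ T η g hη hg t ht => ?_⟩
  have hratio : 0 ≤ (T - t) / (T - t₀) :=
    div_nonneg (sub_nonneg.2 ht.2.le) (sub_nonneg.2 (ht.1.trans ht.2.le))
  have hV : η t ⬝ᵥ P *ᵥ η t ≤ (η t₀ ⬝ᵥ P *ᵥ η t₀) * ((T - t) / (T - t₀)) ^ (p * 2) :=
    le_mul_rpow_of_hasDerivWithinAt_le
      (fun t ht => hasDerivWithinAt_dotProduct_mulVec_self hP.isHermitian (hη t ht))
      (fun t ht => hb₀ b hb (T - t) (sub_pos.2 ht.2) _ _ (hg t ht)) ht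
  refine (sq_le_sq₀ (norm_nonneg _) (by positivity)).1 ?_
  rw [mul_pow, mul_pow, Real.sq_sqrt (by positivity), ← Real.rpow_mul_natCast hratio,
    div_mul_eq_mul_div, div_mul_eq_mul_div, le_div_iff₀' hα, Nat.cast_ofNat]
  calc α * ‖η t‖ ^ 2 ≤ η t ⬝ᵥ P *ᵥ η t := hα_le _
    _ ≤ (η t₀ ⬝ᵥ P *ᵥ η t₀) * ((T - t) / (T - t₀)) ^ (p * 2) := hV
    _ ≤ β * ‖η t₀‖ ^ 2 * ((T - t) / (T - t₀)) ^ (p * 2) := by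
      gcongr
      exact (le_abs_self _).trans ((hβ_le _ _).trans_eq (by ring))

end IsHurwitz

/-- The high-gain scaling `Λ_r = diag(rⁿ, …, r)` of a chain of `n` integrators; indices start at
`0`, so the `i`-th entry is `r ^ (n - i)`. -/
def gainScaling (n : ℕ) (r : ℝ) : Matrix (Fin n) (Fin n) ℝ :=
  diagonal fun i => r ^ (n - (i : ℕ))

section GainScaling

variable {n : ℕ} {r : ℝ}

theorem gainScaling_mul_eq_smul_mul {A : Matrix (Fin n) (Fin n) ℝ}
    (hA : ∀ i j : Fin n, (i : ℕ) + 1 ≠ j → A i j = 0) (r : ℝ) :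
    gainScaling n r * A = r • (A * gainScaling n r) := by
  ext i j
  rw [gainScaling, diagonal_mul, Matrix.smul_apply, mul_diagonal, smul_eq_mul]
  by_cases hij : (i : ℕ) + 1 = j
  · rw [show n - (i : ℕ) = n - (j : ℕ) + 1 by omega, pow_succ]
    ring
  · simp [hA i j hij]

theorem gainScaling_mulVec_eq_smul {B : Fin n → ℝ}
    (hB : ∀ i : Fin n, (i : ℕ) + 1 ≠ n → B i = 0) (r : ℝ) :
    gainScaling n r *ᵥ B = r • B := by
  ext i
  rw [gainScaling, mulVec_diagonal, Pi.smul_apply, smul_eq_mul]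
  by_cases hi : (i : ℕ) + 1 = n
  · rw [show n - (i : ℕ) = 1 by omega, pow_one]
  · simp [hB i hi]

theorem norm_le_norm_gainScaling_mulVec (hr : 1 ≤ r) (v : Fin n → ℝ) :
    ‖v‖ ≤ ‖gainScaling n r *ᵥ v‖ := by
  refine (pi_norm_le_iff_of_nonneg (norm_nonneg _)).2 fun i => ?_
  refine le_trans ?_ (norm_le_pi_norm _ i)
  rw [gainScaling, mulVec_diagonal, norm_mul, norm_pow]
  exact le_mul_of_one_le_left (norm_nonneg _) (one_le_pow₀ (hr.trans (le_abs_self r)))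

-- Since `j ≤ i`, the factor `r ^ (n - i)` on the left is dominated by the factor `r ^ (n - j)`
-- multiplying `v j` on the right, so the bound does not depend on `r`.
theorem norm_gainScaling_mulVec_le (hr : 1 ≤ r) {v w ρ : Fin n → ℝ}
    (hw : ∀ i, |w i| ≤ ∑ j ∈ Finset.Iic i, ρ j * |v j|) :
    ‖gainScaling n r *ᵥ w‖ ≤ (∑ j, |ρ j|) * ‖gainScaling n r *ᵥ v‖ := by
  have hr₀ : 0 ≤ r := zero_le_one.trans hr
  refine (pi_norm_le_iff_of_nonneg (by positivity)).2 fun i => ?_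
  have hterm : ∀ j ∈ Finset.Iic i,
      r ^ (n - (i : ℕ)) * (ρ j * |v j|) ≤ |ρ j| * ‖gainScaling n r *ᵥ v‖ := by
    intro j hj
    have hji : j ≤ i := Finset.mem_Iic.1 hj
    calc r ^ (n - (i : ℕ)) * (ρ j * |v j|) ≤ r ^ (n - (i : ℕ)) * (|ρ j| * |v j|) := by
          gcongr
          exact le_abs_self _
      _ ≤ r ^ (n - (j : ℕ)) * (|ρ j| * |v j|) := by
          gcongr ?_ * _
          exact pow_le_pow_right₀ hr (Nat.sub_le_sub_left hji n)
      _ = |ρ j| * ‖(gainScaling n r *ᵥ v) j‖ := by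
          rw [gainScaling, mulVec_diagonal, norm_mul, norm_pow, Real.norm_of_nonneg hr₀,
            Real.norm_eq_abs]
          ring
      _ ≤ |ρ j| * ‖gainScaling n r *ᵥ v‖ := by
          gcongr
          exact norm_le_pi_norm _ j
  calc ‖(gainScaling n r *ᵥ w) i‖ = r ^ (n - (i : ℕ)) * |w i| := by
        rw [gainScaling, mulVec_diagonal, norm_mul, norm_pow, Real.norm_of_nonneg hr₀,
          Real.norm_eq_abs]
    _ ≤ r ^ (n - (i : ℕ)) * ∑ j ∈ Finset.Iic i, ρ j * |v j| := by gcongr; exact hw i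
    _ ≤ ∑ j ∈ Finset.Iic i, |ρ j| * ‖gainScaling n r *ᵥ v‖ := by
        rw [Finset.mul_sum]
        exact Finset.sum_le_sum hterm
    _ ≤ ∑ j, |ρ j| * ‖gainScaling n r *ᵥ v‖ :=
        Finset.sum_le_sum_of_subset_of_nonneg (Finset.subset_univ _) fun j _ _ => by positivity
    _ = (∑ j, |ρ j|) * ‖gainScaling n r *ᵥ v‖ := (Finset.sum_mul ..).symm

theorem hasDerivAt_div_sub_pow (b : ℝ) {T t : ℝ} (ht : t ≠ T) (q : ℕ) :
    HasDerivAt (fun t => (b / (T - t)) ^ q) ((T - t)⁻¹ * (q * (b / (T - t)) ^ q)) t := by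
  have hTt : T - t ≠ 0 := sub_ne_zero.2 ht.symm
  have hr : HasDerivAt (fun t => b / (T - t)) ((T - t)⁻¹ * (b / (T - t))) t :=
    ((hasDerivAt_const t b).fun_div ((hasDerivAt_id t).const_sub T) hTt).congr_deriv
      (by simp only [id]; field_simp; ring)
  refine (hr.fun_pow q).congr_deriv ?_
  cases q with
  | zero => simp
  | succ q => simp only [add_tsub_cancel_right, pow_succ]; ring

theorem hasDerivWithinAt_gainScaling_mulVec (b : ℝ) {T t : ℝ} (ht : t ≠ T) {s : Set ℝ}
    {e : ℝ → Fin n → ℝ} {e' : Fin n → ℝ} (he : HasDerivWithinAt e e' s t) :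
    HasDerivWithinAt (fun t => gainScaling n (b / (T - t)) *ᵥ e t)
      ((T - t)⁻¹ • (diagonal (fun i : Fin n => ((n - i : ℕ) : ℝ)) *ᵥ
          (gainScaling n (b / (T - t)) *ᵥ e t)) +
        gainScaling n (b / (T - t)) *ᵥ e') s t := by
  refine hasDerivWithinAt_pi.2 fun i => ?_
  simp only [gainScaling, mulVec_diagonal, Pi.add_apply, Pi.smul_apply, smul_eq_mul]
  refine ((hasDerivAt_div_sub_pow b ht (n - i)).hasDerivWithinAt.mul
    (hasDerivWithinAt_pi.1 he i)).congr_deriv ?_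
  ring

end GainScaling

section Network

variable {ι : Type*} [Fintype ι] [DecidableEq ι]

/-- The matrix `L_G + B_L` of a weighted graph `a` whose vertex `k` is tied to the leader with
weight `β k`: the graph Laplacian `D - a` plus `diag β`. The weights are arbitrary reals. -/
def pinnedLaplacian (a : ι → ι → ℝ) (β : ι → ℝ) : Matrix ι ι ℝ :=
  (diagonal fun i => ∑ j, a i j) - of a + diagonal β

theorem sum_smul_sub_add_smul_sub_eq {V : Type*} [AddCommGroup V] [Module ℝ V]
    (a : ι → ι → ℝ) (β : ι → ℝ) (y : ι → V) (y₀ : V) (k : ι) :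
    ∑ j, a k j • (y k - y j) + β k • (y k - y₀) =
      ∑ l, pinnedLaplacian a β k l • (y l - y₀) := by
  have hdiff : ∀ j, y k - y j = (y k - y₀) - (y j - y₀) := fun j =>
    (sub_sub_sub_cancel_right ..).symm
  simp only [pinnedLaplacian, Matrix.add_apply, Matrix.sub_apply, diagonal_apply, of_apply,
    add_smul, sub_smul, Finset.sum_add_distrib, Finset.sum_sub_distrib, ite_smul, zero_smul,
    Finset.sum_ite_eq,
    Finset.mem_univ, if_true, Finset.sum_smul]
  simp only [hdiff, smul_sub, Finset.sum_sub_distrib]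

theorem dotProduct_mulVec_protocol_eq {m : Type*} [Fintype m] (K : m → ℝ) (G : Matrix m m ℝ)
    (a : ι → ι → ℝ) (β : ι → ℝ) (y : ι → m → ℝ) (y₀ : m → ℝ) (k : ι) :
    K ⬝ᵥ (G *ᵥ (∑ j, a k j • (y k - y j) + β k • (y k - y₀))) =
      ∑ l, pinnedLaplacian a β k l * (K ⬝ᵥ G *ᵥ (y l - y₀)) := by
  simp only [sum_smul_sub_add_smul_sub_eq, mulVec_sum, mulVec_smul, dotProduct_sum,
    dotProduct_smul, smul_eq_mul]

theorem one_kronecker_sub_kronecker_mulVec_apply {m : Type*} [Fintype m] (A : Matrix m m ℝ)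
    (L : Matrix ι ι ℝ) (B K : m → ℝ) (ξ : ι → m → ℝ) (q : ι × m) :
    (((1 : Matrix ι ι ℝ) ⊗ₖ A - L ⊗ₖ vecMulVec B K) *ᵥ fun q => ξ q.1 q.2) q =
      (A *ᵥ ξ q.1 - (∑ l, L q.1 l * (K ⬝ᵥ ξ l)) • B) q.2 := by
  rw [sub_mulVec, Pi.sub_apply, Pi.sub_apply]
  congr 1
  · simp [mulVec, dotProduct, Fintype.sum_prod_type, one_apply, ite_mul]
  · simp only [mulVec, dotProduct, Fintype.sum_prod_type, kroneckerMap_apply, vecMulVec_apply,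
      Pi.smul_apply, smul_eq_mul, Finset.mul_sum, Finset.sum_mul]
    exact Finset.sum_congr rfl fun l _ => Finset.sum_congr rfl fun j _ => by ring

end Network

theorem abs_dotProduct_le_sum_abs_mul_norm {m : Type*} [Fintype m] (v w : m → ℝ) :
    |v ⬝ᵥ w| ≤ (∑ i, |v i|) * ‖w‖ := by
  rw [Finset.sum_mul]
  refine (Finset.abs_sum_le_sum_abs _ _).trans (Finset.sum_le_sum fun i _ => ?_)
  rw [abs_mul]
  gcongr
  exact norm_le_pi_norm w i

theorem enorm'_le_sqrt_card_mul_norm {ι : Type*} [Fintype ι] (v : ι → ℝ) :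
    enorm' v ≤ √(Fintype.card ι) * ‖v‖ := by
  rw [enorm', ← Real.sqrt_sq (norm_nonneg v), ← Real.sqrt_mul (Nat.cast_nonneg _)]
  refine Real.sqrt_le_sqrt ?_
  calc ∑ i, v i ^ 2 ≤ ∑ _i : ι, ‖v‖ ^ 2 :=
        Finset.sum_le_sum fun i _ => sq_le_sq' (neg_le_of_abs_le (norm_le_pi_norm v i))
          (le_of_abs_le (norm_le_pi_norm v i))
    _ = Fintype.card ι * ‖v‖ ^ 2 := by simp

theorem one_le_div_sub {b T t : ℝ} (ht : t ∈ Ico 0 T) (hb : T ≤ b) : 1 ≤ b / (T - t) :=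
  (one_le_div (sub_pos.2 ht.2)).2 (by linarith [ht.1])

section ScaledError

variable {ι : Type*} [Fintype ι] {n : ℕ} {b T t : ℝ} {e d : ι → ℝ → Fin n → ℝ}

/-- The tracking errors `e k` of all followers, each scaled by `Λ_r` with `r = b / (T - t)` and
stacked into one vector. -/
noncomputable def scaledError (b T : ℝ) (e : ι → ℝ → Fin n → ℝ) (t : ℝ) : ι × Fin n → ℝ :=
  fun q => (gainScaling n (b / (T - t)) *ᵥ e q.1 t) q.2

/-- The part of the derivative of `scaledError b T e` that the linear closed loop does not account
for: the drift of the time-varying scaling, and the scaled disturbances `d k`. -/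
noncomputable def scaledPerturbation (b T : ℝ) (e d : ι → ℝ → Fin n → ℝ) (t : ℝ) :
    ι × Fin n → ℝ :=
  fun q => ((T - t)⁻¹ • (diagonal (fun i : Fin n => ((n - i : ℕ) : ℝ)) *ᵥ
      (gainScaling n (b / (T - t)) *ᵥ e q.1 t)) +
    gainScaling n (b / (T - t)) *ᵥ d q.1 t) q.2

theorem norm_gainScaling_mulVec_le_norm_scaledError (k : ι) :
    ‖gainScaling n (b / (T - t)) *ᵥ e k t‖ ≤ ‖scaledError b T e t‖ :=
  (pi_norm_le_iff_of_nonneg (norm_nonneg _)).2 fun i => norm_le_pi_norm (scaledError b T e t) (k, i)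

theorem enorm'_le_sqrt_mul_norm_scaledError (hr : 1 ≤ b / (T - t)) (k : ι) :
    enorm' (e k t) ≤ √n * ‖scaledError b T e t‖ :=
  calc enorm' (e k t) ≤ √n * ‖e k t‖ := by simpa using enorm'_le_sqrt_card_mul_norm (e k t)
    _ ≤ √n * ‖scaledError b T e t‖ := by
      gcongr
      exact (norm_le_norm_gainScaling_mulVec hr _).trans
        (norm_gainScaling_mulVec_le_norm_scaledError k)

theorem hasDerivWithinAt_scaledError [DecidableEq ι] {A : Matrix (Fin n) (Fin n) ℝ}
    (hA : ∀ i j : Fin n, (i : ℕ) + 1 ≠ j → A i j = 0) {B : Fin n → ℝ}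
    (hB : ∀ i : Fin n, (i : ℕ) + 1 ≠ n → B i = 0) {K : Fin n → ℝ} {L : Matrix ι ι ℝ} {s : Set ℝ}
    (ht : t ≠ T)
    (he : ∀ k, HasDerivWithinAt (e k)
      (A *ᵥ e k t - (∑ l, L k l * (K ⬝ᵥ gainScaling n (b / (T - t)) *ᵥ e l t)) • B + d k t) s t) :
    HasDerivWithinAt (scaledError b T e)
      ((b / (T - t)) • (((1 : Matrix ι ι ℝ) ⊗ₖ A - L ⊗ₖ vecMulVec B K) *ᵥ scaledError b T e t) +
        scaledPerturbation b T e d t) s t := by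
  refine hasDerivWithinAt_pi.2 fun q => ?_
  refine (hasDerivWithinAt_pi.1 (hasDerivWithinAt_gainScaling_mulVec b ht (he q.1)) q.2).congr_deriv
    ?_
  set r := b / (T - t)
  set Λ := gainScaling n r
  have hscale : ∀ (c : ℝ) (v w : Fin n → ℝ),
      Λ *ᵥ (A *ᵥ v - c • B + w) = r • (A *ᵥ (Λ *ᵥ v) - c • B) + Λ *ᵥ w := by
    intro c v w
    rw [mulVec_add, mulVec_sub, mulVec_mulVec, gainScaling_mul_eq_smul_mul hA, smul_mulVec,
      ← mulVec_mulVec, mulVec_smul, gainScaling_mulVec_eq_smul hB, smul_comm c, ← smul_sub]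
  have hloop := one_kronecker_sub_kronecker_mulVec_apply A L B K (fun l => Λ *ᵥ e l t) q
  rw [hscale, ← add_assoc, add_comm (_ • _) (r • _), add_assoc, Pi.add_apply, Pi.smul_apply,
    ← hloop]
  rfl

theorem norm_scaledPerturbation_le {ρ : ι → Fin n → ℝ} (ht : t ∈ Ico 0 T) (hb : T ≤ b)
    (hd : ∀ k i, |d k t i| ≤ ∑ j ∈ Finset.Iic i, ρ k j * |e k t j|) :
    ‖scaledPerturbation b T e d t‖ ≤
      (n + T * ∑ k, ∑ j, |ρ k j|) / (T - t) * ‖scaledError b T e t‖ := by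
  have hTt : 0 < T - t := sub_pos.2 ht.2
  have hT : 0 < T := ht.1.trans_lt ht.2
  set r := b / (T - t)
  set R := ∑ k, ∑ j, |ρ k j|
  have hr : 1 ≤ r := one_le_div_sub ht hb
  have hdrift : ∀ k (i : Fin n), ‖(diagonal (fun i : Fin n => ((n - i : ℕ) : ℝ)) *ᵥ
      (gainScaling n r *ᵥ e k t)) i‖ ≤ n * ‖scaledError b T e t‖ := by
    intro k i
    rw [mulVec_diagonal, norm_mul, Real.norm_natCast]
    gcongr
    · exact Nat.sub_le ..
    · exact norm_le_pi_norm (scaledError b T e t) (k, i)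
  have hdist : ∀ k, ‖gainScaling n r *ᵥ d k t‖ ≤ T * R / (T - t) * ‖scaledError b T e t‖ := by
    intro k
    calc ‖gainScaling n r *ᵥ d k t‖ ≤ (∑ j, |ρ k j|) * ‖gainScaling n r *ᵥ e k t‖ :=
          norm_gainScaling_mulVec_le hr (hd k)
      _ ≤ R * ‖scaledError b T e t‖ := by
          gcongr
          · exact Finset.single_le_sum (f := fun k => ∑ j, |ρ k j|)
              (fun k _ => by positivity) (Finset.mem_univ k)
          · exact norm_gainScaling_mulVec_le_norm_scaledError k
      _ ≤ T * R / (T - t) * ‖scaledError b T e t‖ := by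
          gcongr
          rw [le_div_iff₀ hTt, mul_comm]
          gcongr
          linarith [ht.1]
  refine (pi_norm_le_iff_of_nonneg (by positivity)).2 fun ⟨k, i⟩ => ?_
  calc ‖scaledPerturbation b T e d t (k, i)‖
      ≤ (T - t)⁻¹ * (n * ‖scaledError b T e t‖) + T * R / (T - t) * ‖scaledError b T e t‖ := by
        refine (norm_add_le _ _).trans (add_le_add ?_ ((norm_le_pi_norm _ i).trans (hdist k)))
        rw [Pi.smul_apply, norm_smul, norm_inv, Real.norm_of_nonneg hTt.le]
        gcongr
        exact hdrift k i
    _ = (n + T * R) / (T - t) * ‖scaledError b T e t‖ := by ring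

theorem abs_sum_mul_dotProduct_gainScaling_mulVec_le (c : ι → ℝ) (K : Fin n → ℝ) :
    |∑ l, c l * (K ⬝ᵥ gainScaling n (b / (T - t)) *ᵥ e l t)| ≤
      (∑ l, |c l|) * (∑ i, |K i|) * ‖scaledError b T e t‖ := by
  rw [mul_assoc, Finset.sum_mul]
  refine (Finset.abs_sum_le_sum_abs _ _).trans (Finset.sum_le_sum fun l _ => ?_)
  rw [abs_mul]
  gcongr
  refine (abs_dotProduct_le_sum_abs_mul_norm K _).trans ?_
  gcongr
  exact norm_gainScaling_mulVec_le_norm_scaledError l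

theorem exists_gain_norm_scaledError_le_mul_rpow [DecidableEq ι] {A : Matrix (Fin n) (Fin n) ℝ}
    (hA : ∀ i j : Fin n, (i : ℕ) + 1 ≠ j → A i j = 0) {B : Fin n → ℝ}
    (hB : ∀ i : Fin n, (i : ℕ) + 1 ≠ n → B i = 0) {K : Fin n → ℝ} {L : Matrix ι ι ℝ}
    (hL : IsHurwitz ((1 : Matrix ι ι ℝ) ⊗ₖ A - L ⊗ₖ vecMulVec B K)) (ρ : ι → Fin n → ℝ)
    (T p : ℝ) :
    ∃ b₀, T ≤ b₀ ∧ ∀ b ≥ b₀, ∀ e d : ι → ℝ → Fin n → ℝ,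
      (∀ t ∈ Ico 0 T, ∀ k, HasDerivWithinAt (e k)
        (A *ᵥ e k t - (∑ l, L k l * (K ⬝ᵥ gainScaling n (b / (T - t)) *ᵥ e l t)) • B + d k t)
        (Ico 0 T) t) →
      (∀ t ∈ Ico 0 T, ∀ k i, |d k t i| ≤ ∑ j ∈ Finset.Iic i, ρ k j * |e k t j|) →
      ∃ C, 0 ≤ C ∧ ∀ t ∈ Ico 0 T, ‖scaledError b T e t‖ ≤ C * (T - t) ^ p := by
  obtain ⟨b₀, γ, hγ, hdecay⟩ := hL.exists_gain_norm_le_mul_rpow (n + T * ∑ k, ∑ j, |ρ k j|) p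
  refine ⟨max T b₀, le_max_left _ _, fun b hb e d he hd => ?_⟩
  obtain ⟨hTb, hb₀⟩ := max_le_iff.1 hb
  refine ⟨γ * ‖scaledError b T e 0‖ * |T ^ p|⁻¹, by positivity, fun t ht => ?_⟩
  have hT : 0 ≤ T := ht.1.trans ht.2.le
  calc ‖scaledError b T e t‖ ≤ γ * ‖scaledError b T e 0‖ * ((T - t) / (T - 0)) ^ p :=
        hdecay b hb₀ 0 T _ (scaledPerturbation b T e d)
          (fun t ht => hasDerivWithinAt_scaledError hA hB ht.2.ne (he t ht))
          (fun t ht => norm_scaledPerturbation_le ht hTb (hd t ht)) t ht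
    _ = γ * ‖scaledError b T e 0‖ * |T ^ p|⁻¹ * (T - t) ^ p := by
        rw [sub_zero, Real.div_rpow (sub_nonneg.2 ht.2.le) hT, abs_of_nonneg (by positivity)]
        ring

end ScaledError

section Decay

variable {f : ℝ → ℝ} {C T p : ℝ}

theorem exists_forall_le_of_forall_le_mul_rpow (hC : 0 ≤ C) (hp : 0 ≤ p)
    (hf : ∀ t ∈ Ico 0 T, f t ≤ C * (T - t) ^ p) : ∃ D, ∀ t ∈ Ico 0 T, f t ≤ D := by
  refine ⟨C * T ^ p, fun t ht => (hf t ht).trans ?_⟩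
  have : 0 ≤ T - t := sub_nonneg.2 ht.2.le
  gcongr
  linarith [ht.1]

theorem tendsto_zero_of_forall_le_mul_rpow (hT : 0 < T) (hp : 0 < p) (hf₀ : ∀ t, 0 ≤ f t)
    (hf : ∀ t ∈ Ico 0 T, f t ≤ C * (T - t) ^ p) : Tendsto f (nhdsWithin T (Iio T)) (nhds 0) := by
  have hlim : Tendsto (fun t => C * (T - t) ^ p) (nhdsWithin T (Iio T)) (nhds 0) := by
    have hcont : Continuous fun t => C * (T - t) ^ p :=
      continuous_const.mul ((continuous_const.sub continuous_id).rpow_const fun _ => .inr hp.le)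
    simpa [Real.zero_rpow hp.ne'] using (hcont.tendsto T).mono_left nhdsWithin_le_nhds
  refine squeeze_zero' (.of_forall hf₀) ?_ hlim
  filter_upwards [Ico_mem_nhdsLT hT] using hf

end Decay

theorem prescribed_time_state_feedback_consensus_general {ι : Type*} [Fintype ι] [DecidableEq ι]
    {n : ℕ} {T p : ℝ} (hT : 0 < T) (hp : 0 < p)
    {A : Matrix (Fin n) (Fin n) ℝ} (hA : ∀ i j : Fin n, (i : ℕ) + 1 ≠ j → A i j = 0)
    {B : Fin n → ℝ} (hB : ∀ i : Fin n, (i : ℕ) + 1 ≠ n → B i = 0)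
    {F₀ : ℝ → (Fin n → ℝ) → Fin n → ℝ} {F : ι → ℝ → (Fin n → ℝ) → Fin n → ℝ} {ρ : ι → Fin n → ℝ}
    (hF : ∀ k, ∀ t ∈ Ico 0 T, ∀ (ξ ζ : Fin n → ℝ) (i : Fin n),
      |F k t ξ i - F₀ t ζ i| ≤ ∑ j ∈ Finset.Iic i, ρ k j * |ξ j - ζ j|)
    {a : ι → ι → ℝ} {β : ι → ℝ} {K : Fin n → ℝ}
    (hAc : IsHurwitz ((1 : Matrix ι ι ℝ) ⊗ₖ A - pinnedLaplacian a β ⊗ₖ vecMulVec B K)) :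
    ∃ b₀, T ≤ b₀ ∧ ∀ b ≥ b₀, ∀ (x₀ : ℝ → Fin n → ℝ) (x : ι → ℝ → Fin n → ℝ) (u : ι → ℝ → ℝ),
      (∀ k, ∀ t ∈ Ico 0 T, u k t = -(K ⬝ᵥ (gainScaling n (b / (T - t)) *ᵥ
        (∑ j, a k j • (x k t - x j t) + β k • (x k t - x₀ t))))) →
      (∀ t ∈ Ico 0 T, HasDerivWithinAt x₀ (A *ᵥ x₀ t + F₀ t (x₀ t)) (Ico 0 T) t) →
      (∀ k, ∀ t ∈ Ico 0 T,
        HasDerivWithinAt (x k) (A *ᵥ x k t + u k t • B + F k t (x k t)) (Ico 0 T) t) →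
      ∀ k,
        (∃ C, ∀ t ∈ Ico 0 T, enorm' (x k t - x₀ t) ≤ C) ∧
        (∃ C, 0 ≤ C ∧ ∀ t ∈ Ico 0 T, enorm' (x k t - x₀ t) ≤ C * (T - t) ^ p) ∧
        Tendsto (fun t => enorm' (x k t - x₀ t)) (nhdsWithin T (Iio T)) (nhds 0) ∧
        ∃ C, ∀ t ∈ Ico 0 T, |u k t| ≤ C := by
  obtain ⟨b₀, hTb₀, hdecay⟩ := exists_gain_norm_scaledError_le_mul_rpow hA hB hAc ρ T p
  refine ⟨b₀, hTb₀, fun b hb x₀ x u hu hx₀ hx k => ?_⟩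
  set e : ι → ℝ → Fin n → ℝ := fun k t => x k t - x₀ t
  have hfeedback : ∀ k, ∀ t ∈ Ico 0 T, u k t =
      -∑ l, pinnedLaplacian a β k l * (K ⬝ᵥ gainScaling n (b / (T - t)) *ᵥ e l t) :=
    fun k t ht => (hu k t ht).trans
      (congrArg Neg.neg (dotProduct_mulVec_protocol_eq K _ a β (fun j => x j t) (x₀ t) k))
  obtain ⟨C, hC, he⟩ := hdecay b hb e (fun k t => F k t (x k t) - F₀ t (x₀ t))
    (fun t ht k => ((hx k t ht).sub (hx₀ t ht)).congr_deriv (by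
      rw [hfeedback k t ht, mulVec_sub, neg_smul]
      abel))
    (fun t ht k i => hF k t ht _ _ i)
  have herror : ∀ t ∈ Ico 0 T, enorm' (e k t) ≤ √n * C * (T - t) ^ p := by
    intro t ht
    rw [mul_assoc]
    refine (enorm'_le_sqrt_mul_norm_scaledError (one_le_div_sub ht (hTb₀.trans hb)) k).trans ?_
    gcongr
    exact he t ht
  have hcontrol : ∀ t ∈ Ico 0 T,
      |u k t| ≤ (∑ l, |pinnedLaplacian a β k l|) * (∑ i, |K i|) * C * (T - t) ^ p := by
    intro t ht
    rw [hfeedback k t ht, abs_neg, mul_assoc _ C]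
    refine (abs_sum_mul_dotProduct_gainScaling_mulVec_le ..).trans ?_
    gcongr
    exact he t ht
  exact ⟨exists_forall_le_of_forall_le_mul_rpow (by positivity) hp.le herror,
    ⟨√n * C, by positivity, herror⟩,
    tendsto_zero_of_forall_le_mul_rpow hT hp (fun t => Real.sqrt_nonneg _) herror,
    exists_forall_le_of_forall_le_mul_rpow (by positivity) hp.le hcontrol⟩

/-- Theorem 1 (prescribed-time leader-following consensus by distributed
state feedback): under Assumption 1 (with possibly unknown growth rates `ρ_{k,j}`),
positive definiteness of `L̄ = L_G + B_L` and Hurwitzness of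
`A_c = I_N ⊗ A - L̄ ⊗ (B K)`, there exists a proportional coefficient `b ≥ T` such
that for every C¹ family `x_0,…,x_N : [0,T) → ℝⁿ` solving the closed-loop system
with the distributed protocol
`u_k = -K Λ_{r(t)} (∑_j a_{kj}(x_k - x_j) + b_k (x_k - x_0))` (with `r(t) = b/(T-t)`
and `Λ_r = diag(rⁿ,…,r)`), each follower satisfies: (i) `x_k - x_0` is bounded on
`[0,T)`; (ii) there are `κ > 0` and `C ≥ 0` with
`|x_k(t) - x_0(t)| ≤ C (T-t)^{(κ+2)/2}` on `[0,T)`, so `x_k(t) - x_0(t) → 0` as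
`t → T⁻`; (iii) `u_k` is bounded on `[0,T)`. -/
theorem prescribed_time_state_feedback_consensus
    (n N : ℕ) (hn : 0 < n) (hN : 0 < N)
    (T : ℝ) (hT : 0 < T)
    (A : Matrix (Fin n) (Fin n) ℝ)
    (hA : ∀ i j : Fin n, A i j = if (i : ℕ) + 1 = (j : ℕ) then 1 else 0)
    (B : Fin n → ℝ) (hB : ∀ i : Fin n, B i = if (i : ℕ) = n - 1 then 1 else 0)
    -- Agent nonlinearities and Assumption 1
    (F : Fin (N + 1) → ℝ → (Fin n → ℝ) → (Fin n → ℝ))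
    (ρ : Fin (N + 1) → Fin n → ℝ) (hρ : ∀ k j, 0 ≤ ρ k j)
    (hF : ∀ k t (ξ ζ : Fin n → ℝ) (i : Fin n),
      |F k t ξ i - F 0 t ζ i| ≤ ∑ j ∈ Finset.Iic i, ρ k j * |ξ j - ζ j|)
    -- Communication topology
    (a : Fin N → Fin N → ℝ)
    (ha_symm : ∀ i j, a i j = a j i) (ha_nonneg : ∀ i j, 0 ≤ a i j)
    (ha_diag : ∀ i, a i i = 0)
    (bL : Fin N → ℝ) (hbL : ∀ k, bL k = 0 ∨ bL k = 1)
    (Lbar : Matrix (Fin N) (Fin N) ℝ)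
    (hLbar : Lbar =
      (Matrix.diagonal fun i => ∑ j, a i j) - Matrix.of a + Matrix.diagonal bL)
    (hLbarPD : Lbar.PosDef)
    -- Feedback gain making A_c Hurwitz
    (K : Fin n → ℝ)
    (Ac : Matrix (Fin N × Fin n) (Fin N × Fin n) ℝ)
    (hAcdef : Ac = (1 : Matrix (Fin N) (Fin N) ℝ) ⊗ₖ A - Lbar ⊗ₖ vecMulVec B K)
    (hAc : IsHurwitz Ac) :
    ∃ b : ℝ, T ≤ b ∧
      ∀ (x : Fin (N + 1) → ℝ → (Fin n → ℝ)) (u : Fin N → ℝ → ℝ),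
        -- the distributed state-feedback protocol
        (∀ (k : Fin N) (t : ℝ), u k t =
          -(K ⬝ᵥ ((Matrix.diagonal fun i : Fin n => (b / (T - t)) ^ (n - (i : ℕ))) *ᵥ
            (∑ j, a k j • (x k.succ t - x j.succ t) +
              bL k • (x k.succ t - x 0 t))))) →
        -- leader dynamics (u_0 ≡ 0)
        (∀ t ∈ Set.Ico (0 : ℝ) T,
          HasDerivWithinAt (x 0) (A *ᵥ x 0 t + F 0 t (x 0 t)) (Set.Ico 0 T) t) →
        -- follower dynamics
        (∀ (k : Fin N), ∀ t ∈ Set.Ico (0 : ℝ) T,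
          HasDerivWithinAt (x k.succ)
            (A *ᵥ x k.succ t + u k t • B + F k.succ t (x k.succ t))
            (Set.Ico 0 T) t) →
        ∀ k : Fin N,
          -- (i) boundedness of the tracking error
          (∃ C1 : ℝ, ∀ t ∈ Set.Ico (0 : ℝ) T,
            enorm' (fun i => x k.succ t i - x 0 t i) ≤ C1) ∧
          -- (ii) prescribed-time decay rate and convergence as t → T⁻
          (∃ κ : ℝ, 0 < κ ∧ ∃ C : ℝ, 0 ≤ C ∧
            ∀ t ∈ Set.Ico (0 : ℝ) T,
              enorm' (fun i => x k.succ t i - x 0 t i) ≤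
                C * (T - t) ^ ((κ + 2) / 2)) ∧
          Tendsto (fun t => enorm' (fun i => x k.succ t i - x 0 t i))
            (nhdsWithin T (Set.Iio T)) (nhds 0) ∧
          -- (iii) boundedness of the control input
          (∃ Cu : ℝ, ∀ t ∈ Set.Ico (0 : ℝ) T, |u k t| ≤ Cu) := by
  subst hLbar hAcdef
  obtain ⟨b, hTb, h⟩ := prescribed_time_state_feedback_consensus_general (p := (2 + 2) / 2) hT
    (by norm_num) (fun i j hij => by rw [hA, if_neg hij])
    (fun i hi => by rw [hB, if_neg (by omega)]) (fun k t _ => hF k.succ t) hAc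
  refine ⟨b, hTb, fun x u hu hx₀ hx k => ?_⟩
  obtain ⟨hbdd, hdecay, hlim, hcontrol⟩ :=
    h b le_rfl (x 0) (fun k => x k.succ) u (fun k t _ => hu k t) hx₀ hx k
  exact ⟨hbdd, ⟨2, two_pos, hdecay⟩, hlim, hcontrol⟩
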